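/- For every Lie subalgebra 𝔥 of T*𝔥₃ there exists a nondegenerate symmetric bilinear form ⟨·,·⟩ on T*𝔥₃ such that 𝔥 is totally geodesic for the associated metric, i.e. ∇_y z ∈ 𝔥 for all y, z ∈ 𝔥, where ∇ is the Levi-Civita connection of ⟨·,·⟩; equivalently, ⟨[x,y], z⟩ + ⟨[x,z], y⟩ = 0 for all x with ⟨x, 𝔥⟩ = 0 and all y, z ∈ 𝔥. -/

import Mathlib

open Matrix

noncomputable section

/-- The Lie bracket of `T*𝔥₃` in the basis `(e₁,…,e₆)`:
`[e₁,e₂]=e₆`, `[e₁,e₃]=−e₅`, `[e₂,e₃]=e₄`. -/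
def bra (x y : Fin 6 → ℝ) : Fin 6 → ℝ :=
  ![0, 0, 0, x 1 * y 2 - x 2 * y 1, x 2 * y 0 - x 0 * y 2, x 0 * y 1 - x 1 * y 0]

abbrev E3 := EuclideanSpace ℝ (Fin 3)
abbrev V6 := Fin 6 → ℝ

theorem exists_sub {V : Type*} [AddCommGroup V] [Module ℝ V] [FiniteDimensional ℝ V]
    (H : Submodule ℝ V) (n : ℕ) (hn : n ≤ Module.finrank ℝ H) :
    ∃ K : Submodule ℝ V, K ≤ H ∧ Module.finrank ℝ K = n := by
  let b := Module.finBasis ℝ H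
  let f : Fin n → V := fun i => (b (Fin.castLE hn i) : V)
  have hf : LinearIndependent ℝ f := by
    have h1 := b.linearIndependent.comp (Fin.castLE hn) (Fin.castLE_injective hn)
    exact h1.map' H.subtype (Submodule.ker_subtype H)
  refine ⟨Submodule.span ℝ (Set.range f), ?_, ?_⟩
  · rw [Submodule.span_le]
    rintro _ ⟨i, rfl⟩
    exact (b (Fin.castLE hn i)).2
  · simpa using finrank_span_eq_card hf

theorem exists_sup {V : Type*} [AddCommGroup V] [Module ℝ V] [FiniteDimensional ℝ V]
    (H : Submodule ℝ V) (n : ℕ) (hn : Module.finrank ℝ H ≤ n) (hn' : n ≤ Module.finrank ℝ V) :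
    ∃ K : Submodule ℝ V, H ≤ K ∧ Module.finrank ℝ K = n := by
  obtain ⟨Q, hQ⟩ := H.exists_isCompl
  have h1 := Submodule.finrank_add_eq_of_isCompl hQ
  obtain ⟨K, hK, hKn⟩ := exists_sub Q (n - Module.finrank ℝ H) (by omega)
  refine ⟨H ⊔ K, le_sup_left, ?_⟩
  have h2 := Submodule.finrank_sup_add_finrank_inf_eq H K
  have h3 : H ⊓ K = ⊥ := (hQ.disjoint.mono_right hK).eq_bot
  rw [h3, finrank_bot] at h2
  omega

theorem exists_G {L : Type*} [AddCommGroup L] [Module ℝ L] [FiniteDimensional ℝ L]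
    (hL : Module.finrank ℝ L = 3) (N : L →ₗ[ℝ] E3) :
    ∃ G : E3 →ₗ[ℝ] L, Function.Injective G ∧
      ∀ y, N (G y) = (LinearMap.range N).starProjection y := by
  obtain ⟨s, hs⟩ := N.rangeRestrict.exists_rightInverse_of_surjective N.range_rangeRestrict
  have h1 := N.finrank_range_add_finrank_ker
  have h2 := (LinearMap.range N).finrank_add_finrank_orthogonal
  have h3 : Module.finrank ℝ E3 = 3 := by simp
  have h4 : Module.finrank ℝ (LinearMap.range N)ᗮ = Module.finrank ℝ (LinearMap.ker N) := by
    omega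
  let j := LinearEquiv.ofFinrankEq _ _ h4
  let P : E3 →ₗ[ℝ] LinearMap.range N :=
    ((LinearMap.range N).orthogonalProjectionOnto : E3 →L[ℝ] LinearMap.range N).toLinearMap
  let P' : E3 →ₗ[ℝ] ((LinearMap.range N)ᗮ : Submodule ℝ E3) :=
    ((LinearMap.range N)ᗮ.orthogonalProjectionOnto).toLinearMap
  let G : E3 →ₗ[ℝ] L := s ∘ₗ P + (LinearMap.ker N).subtype ∘ₗ j.toLinearMap ∘ₗ P'
  have hG : ∀ y, G y = s (P y) + (j (P' y) : L) := fun y => rfl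
  have hNG : ∀ y, N (G y) = (P y : E3) := by
    intro y
    rw [hG, map_add, LinearMap.mem_ker.1 (j (P' y)).2, add_zero]
    have := congrArg Subtype.val (LinearMap.congr_fun hs (P y))
    simpa using this
  refine ⟨G, ?_, ?_⟩
  · rw [← LinearMap.ker_eq_bot, LinearMap.ker_eq_bot']
    intro y hy
    have h5 := hNG y
    rw [hy, map_zero] at h5
    have h6 : P y = 0 := Subtype.ext h5.symm
    have h7 := hG y
    rw [hy, h6, map_zero, zero_add] at h7
    have h8 : P' y = 0 := j.map_eq_zero_iff.1 (Subtype.ext h7.symm)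
    have h9 := (LinearMap.range N).starProjection_add_starProjection_orthogonal y
    rw [← h9]
    change ((P y : E3)) + (P' y : E3) = 0
    rw [h6, h8]; simp
  · intro y; rw [hNG]; rfl

def piL : V6 →ₗ[ℝ] E3 where
  toFun v := !₂[v 0, v 1, v 2]
  map_add' x y := by ext i; fin_cases i <;> simp
  map_smul' c x := by ext i; fin_cases i <;> simp

def tauL : V6 →ₗ[ℝ] E3 where
  toFun v := !₂[v 3, v 4, v 5]
  map_add' x y := by ext i; fin_cases i <;> simp
  map_smul' c x := by ext i; fin_cases i <;> simp

def iotaL : E3 →ₗ[ℝ] V6 where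
  toFun v := ![0, 0, 0, v 0, v 1, v 2]
  map_add' x y := by ext i; fin_cases i <;> simp
  map_smul' c x := by ext i; fin_cases i <;> simp

theorem pi_iota (y : E3) : piL (iotaL y) = 0 := by
  ext i; fin_cases i <;> simp [piL, iotaL]

theorem tau_iota (y : E3) : tauL (iotaL y) = y := by
  ext i; fin_cases i <;> simp [tauL, iotaL]

theorem iota_tau (v : V6) (h : piL v = 0) : iotaL (tauL v) = v := by
  have h0 := congrArg (fun w : E3 => w 0) h
  have h1 := congrArg (fun w : E3 => w 1) h
  have h2 := congrArg (fun w : E3 => w 2) h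
  simp [piL] at h0 h1 h2
  ext i; fin_cases i <;> simp [tauL, iotaL, *]

theorem pi_bra (x y : V6) : piL (bra x y) = 0 := by
  ext i; fin_cases i <;> simp [piL, bra]

theorem bra_central (x y : V6) (h : piL x = 0) : bra x y = 0 := by
  have h0 := congrArg (fun w : E3 => w 0) h
  have h1 := congrArg (fun w : E3 => w 1) h
  have h2 := congrArg (fun w : E3 => w 2) h
  simp [piL] at h0 h1 h2
  ext i; fin_cases i <;> simp [bra, *]

def braL : V6 →ₗ[ℝ] V6 →ₗ[ℝ] V6 :=
  LinearMap.mk₂ ℝ bra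
    (by intro x y z; ext i; fin_cases i <;> simp [bra] <;> ring)
    (by intro c x y; ext i; fin_cases i <;> simp [bra] <;> ring)
    (by intro x y z; ext i; fin_cases i <;> simp [bra] <;> ring)
    (by intro c x y; ext i; fin_cases i <;> simp [bra] <;> ring)

def NL : Module.Dual ℝ V6 →ₗ[ℝ] E3 where
  toFun l := !₂[l (iotaL !₂[1, 0, 0]), l (iotaL !₂[0, 1, 0]), l (iotaL !₂[0, 0, 1])]
  map_add' x y := by ext i; fin_cases i <;> simp
  map_smul' c x := by ext i; fin_cases i <;> simp

theorem NL_inner (l : Module.Dual ℝ V6) (y : E3) : l (iotaL y) = inner ℝ (NL l) y := by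
  have : y = y 0 • !₂[1, 0, 0] + y 1 • !₂[0, 1, 0] + y 2 • !₂[0, 0, 1] := by
    ext i; fin_cases i <;> simp
  conv_lhs => rw [this]
  simp only [map_add, map_smul, smul_eq_mul]
  simp [PiLp.inner_apply, Fin.sum_univ_three, NL]

theorem exists_form (K : Submodule ℝ V6) (hK : Module.finrank ℝ K = 3) :
    ∃ g : V6 →ₗ[ℝ] V6 →ₗ[ℝ] ℝ,
      (∀ x y, g x y = g y x) ∧ (∀ x, (∀ y, g x y = 0) → x = 0) ∧
      (∀ c, piL c = 0 → ∀ k ∈ K, g c k = 0) := by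
  have hL : Module.finrank ℝ K.dualAnnihilator = 3 := by
    have := Subspace.finrank_add_finrank_dualAnnihilator_eq K
    have h6 : Module.finrank ℝ V6 = 6 := by simp
    omega
  let N : K.dualAnnihilator →ₗ[ℝ] E3 := NL.domRestrict K.dualAnnihilator
  obtain ⟨G, hGi, hG⟩ := exists_G (L := K.dualAnnihilator) hL N
  set W := LinearMap.range N
  have key : ∀ y y' : E3, (G y : Module.Dual ℝ V6) (iotaL y') = inner ℝ (W.starProjection y) y' := by
    intro y y'
    rw [NL_inner, ← hG]; rfl
  have hsym : ∀ y y' : E3, inner ℝ (W.starProjection y) y' = inner ℝ (W.starProjection y') y := by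
    intro y y'
    rw [Submodule.inner_starProjection_left_eq_right, real_inner_comm]
  let g : V6 →ₗ[ℝ] V6 →ₗ[ℝ] ℝ := LinearMap.mk₂ ℝ
    (fun v w => - inner ℝ (piL v) (piL w) + (G (tauL v) : Module.Dual ℝ V6) w
      + (G (tauL w) : Module.Dual ℝ V6) v - inner ℝ (W.starProjection (tauL v)) (tauL w))
    (by intro x y z; simp [inner_add_left]; ring)
    (by intro c x y; simp [inner_smul_left]; ring)
    (by intro x y z; simp [inner_add_right]; ring)
    (by intro c x y; simp [inner_smul_right]; ring)
  have hg : ∀ v w, g v w = - inner ℝ (piL v) (piL w) + (G (tauL v) : Module.Dual ℝ V6) w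
      + (G (tauL w) : Module.Dual ℝ V6) v - inner ℝ (W.starProjection (tauL v)) (tauL w) :=
    fun v w => rfl
  refine ⟨g, ?_, ?_, ?_⟩
  · intro x y
    rw [hg, hg, hsym, real_inner_comm]; ring
  · intro v hv
    have h1 : ∀ y', (G y' : Module.Dual ℝ V6) v = 0 := by
      intro y'
      have := hv (iotaL y')
      rw [hg, pi_iota, tau_iota, key, inner_zero_right] at this
      linarith
    have h2 := hv v
    have hp : inner ℝ (W.starProjection (tauL v)) (tauL v) = ‖W.starProjection (tauL v)‖ ^ 2 := by
      have := W.re_inner_starProjection_eq_normSq (tauL v)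
      simpa using this
    rw [hg, h1, hp, real_inner_self_eq_norm_sq] at h2
    have h3 : piL v = 0 := by
      rw [← norm_eq_zero]
      nlinarith [sq_nonneg ‖piL v‖, sq_nonneg ‖W.starProjection (tauL v)‖]
    have h4 : W.starProjection (tauL v) = 0 := by
      rw [← norm_eq_zero]
      nlinarith [sq_nonneg ‖piL v‖, sq_nonneg ‖W.starProjection (tauL v)‖]
    have h5 : G (tauL v) = 0 := by
      apply Subtype.ext
      apply LinearMap.ext
      intro w
      have := hv w
      rw [hg, h1, h3, h4, inner_zero_left, inner_zero_left] at this
      simpa using this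
    have h6 : tauL v = 0 := hGi (by rw [h5, map_zero])
    rw [← iota_tau v h3, h6, map_zero]
  · intro c hc k hk
    have h1 : (G (tauL c) : Module.Dual ℝ V6) k = 0 :=
      (Submodule.mem_dualAnnihilator _).1 (G (tauL c)).2 k hk
    have h2 : (G (tauL k) : Module.Dual ℝ V6) c = inner ℝ (W.starProjection (tauL k)) (tauL c) := by
      rw [← key, iota_tau c hc]
    rw [hg, h1, h2, hc, hsym (tauL c), inner_zero_left]; ring

/-- For every Lie subalgebra `𝔥` of `T*𝔥₃` there is a nondegenerate symmetric bilinear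
form making `𝔥` totally geodesic for the Levi-Civita connection. -/
theorem stmt_18 (H : Submodule ℝ (Fin 6 → ℝ))
    (hH : ∀ x ∈ H, ∀ y ∈ H, bra x y ∈ H) :
    ∃ g : (Fin 6 → ℝ) →ₗ[ℝ] (Fin 6 → ℝ) →ₗ[ℝ] ℝ,
      (∀ x y, g x y = g y x) ∧ (∀ x, (∀ y, g x y = 0) → x = 0) ∧
      (∃ D : (Fin 6 → ℝ) → (Fin 6 → ℝ) → (Fin 6 → ℝ),
        (∀ x y z, 2 * g (D x y) z =
          g (bra x y) z - g (bra y z) x + g (bra z x) y) ∧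
        ∀ y ∈ H, ∀ z ∈ H, D y z ∈ H) ∧
      (∀ x : Fin 6 → ℝ, (∀ h ∈ H, g x h = 0) →
        ∀ y ∈ H, ∀ z ∈ H, g (bra x y) z + g (bra x z) y = 0) := by
  have hfin : Module.finrank ℝ (Fin 6 → ℝ) = 6 := by simp
  have main : ∃ g : V6 →ₗ[ℝ] V6 →ₗ[ℝ] ℝ,
      (∀ x y, g x y = g y x) ∧ (∀ x, (∀ y, g x y = 0) → x = 0) ∧
      (∀ x : V6, (∀ h ∈ H, g x h = 0) →
        ∀ y ∈ H, ∀ z ∈ H, g (bra x y) z + g (bra x z) y = 0) := by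
    rcases le_total (Module.finrank ℝ H) 3 with h | h
    · obtain ⟨K, hHK, hK⟩ := exists_sup H 3 h (by omega)
      obtain ⟨g, hs, hn, hc⟩ := exists_form K hK
      refine ⟨g, hs, hn, fun x _ y hy z hz => ?_⟩
      rw [hc _ (pi_bra x y) z (hHK hz), hc _ (pi_bra x z) y (hHK hy), add_zero]
    · obtain ⟨K, hKH, hK⟩ := exists_sub H 3 h
      obtain ⟨g, hs, hn, hc⟩ := exists_form K hK
      refine ⟨g, hs, hn, fun x hx y hy z hz => ?_⟩
      have hnd : LinearMap.BilinForm.Nondegenerate g :=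
        ⟨hn, fun y h => hn y fun x => by rw [hs]; exact h x⟩
      have h1 : Module.finrank ℝ (LinearMap.BilinForm.orthogonal g K) = 3 := by
        rw [LinearMap.BilinForm.finrank_orthogonal hnd, hK, hfin]
      have h2 : Module.finrank ℝ (LinearMap.range iotaL) = 3 := by
        rw [LinearMap.finrank_range_of_inj]
        · simp
        · exact Function.LeftInverse.injective tau_iota
      have h3 : LinearMap.range iotaL ≤ LinearMap.BilinForm.orthogonal g K := by
        rintro _ ⟨y, rfl⟩ k hk
        change g k (iotaL y) = 0
        rw [hs]; exact hc _ (pi_iota y) k hk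
      have h4 := Submodule.eq_of_le_of_finrank_eq h3 (by rw [h1, h2])
      have h5 : x ∈ LinearMap.range iotaL := by
        rw [h4]
        intro k hk
        change g k x = 0
        rw [hs]; exact hx k (hKH hk)
      obtain ⟨w, rfl⟩ := h5
      rw [bra_central _ y (pi_iota w), bra_central _ z (pi_iota w)]
      simp
  obtain ⟨g, hs, hn, hx⟩ := main
  have hnd : LinearMap.BilinForm.Nondegenerate g :=
    ⟨hn, fun y h => hn y fun x => by rw [hs]; exact h x⟩
  have hrefl : LinearMap.BilinForm.IsRefl g := fun x y h => by rw [hs]; exact h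
  let F : V6 → V6 → Module.Dual ℝ V6 := fun x y => (1 / 2 : ℝ) •
    (g (bra x y) - (g.flip x) ∘ₗ (braL y) + (g.flip y) ∘ₗ (braL.flip x))
  have hF : ∀ x y z, F x y z = (1 / 2 : ℝ) *
      (g (bra x y) z - g (bra y z) x + g (bra z x) y) := fun x y z => rfl
  have hD : ∀ x y z, 2 * g ((LinearMap.BilinForm.toDual g hnd).symm (F x y)) z =
          g (bra x y) z - g (bra y z) x + g (bra z x) y := by
    intro x y z
    rw [LinearMap.BilinForm.apply_toDual_symm_apply, hF]; ring
  refine ⟨g, hs, hn, ⟨fun x y => (LinearMap.BilinForm.toDual g hnd).symm (F x y), hD, ?_⟩, hx⟩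
  intro y hy z hz
  rw [← LinearMap.BilinForm.orthogonal_orthogonal hnd hrefl H]
  intro x hxo
  have hxo' : ∀ h ∈ H, g x h = 0 := fun h hh => by rw [hs]; exact hxo h hh
  change g x _ = 0
  rw [hs]
  have h1 := hD y z x
  have h2 := hx x hxo' y hy z hz
  have h3 : g (bra y z) x = 0 := hxo _ (hH y hy z hz)
  have h4 : bra z x = - bra x z := by
    ext i; fin_cases i <;> simp [bra] <;> ring
  rw [h3, h4, map_neg, LinearMap.neg_apply] at h1
  linarith
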